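/- Let p ≥ 5 be a prime and let q > p be a prime number. Define f_q(X,Y) = 2(X^p + Y^p)q^p − (X − Y)²q^{2p} − (X^{p−1} + X^{p−2}Y + ⋯ + Y^{p−1})². Then there is no prime number ℓ such that ℓ² divides f_q(a,b) for every pair of positive integers (a,b). -/

import Mathlib

open scoped BigOperators

/-- `g(a,b) = Σ_{i=0}^{p−1} a^{p−1−i} b^{i}`. -/
def gPoly (p : ℕ) (a b : ℤ) : ℤ := ∑ i ∈ Finset.range p, a ^ (p - 1 - i) * b ^ i

/-- `f_q(a,b) = 2(a^p + b^p)q^p − (a−b)²q^{2p} − g(a,b)²`. -/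
def fPoly (p : ℕ) (q a b : ℤ) : ℤ :=
  2 * (a ^ p + b ^ p) * q ^ p - (a - b) ^ 2 * q ^ (2 * p) - (gPoly p a b) ^ 2

theorem gPoly_diag (p : ℕ) (a : ℤ) : gPoly p a a = p * a ^ (p - 1) := by
  unfold gPoly
  rw [Finset.sum_congr rfl (g := fun _ => a ^ (p - 1))]
  · simp
  · intro i hi
    rw [Finset.mem_range] at hi
    rw [← pow_add]
    congr 1
    omega

theorem fPoly_diag (p : ℕ) (q a : ℤ) :
    fPoly p q a a = 4 * a ^ p * q ^ p - p ^ 2 * (a ^ (p - 1)) ^ 2 := by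
  unfold fPoly
  rw [gPoly_diag]
  ring

theorem stmt_7 (p q : ℕ) (hp : p.Prime) (hp5 : 5 ≤ p) (hq : q.Prime) (hqp : p < q) :
    ¬ ∃ ℓ : ℕ, ℓ.Prime ∧ ∀ a b : ℤ, 0 < a → 0 < b →
      (ℓ : ℤ) ^ 2 ∣ fPoly p (q : ℤ) a b := by
  rintro ⟨l, hl, H⟩
  have hodd : Odd p := hp.odd_of_ne_two (by omega)
  have hev : Even (p - 1) := by
    obtain ⟨k, hk⟩ := hodd
    exact ⟨k, by omega⟩
  have hl2 : (2 : ℤ) ≤ l := by exact_mod_cast hl.two_le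
  have h1 := H 1 1 one_pos one_pos
  have h2 := H ((l : ℤ) ^ 2 - 1) ((l : ℤ) ^ 2 - 1) (by nlinarith) (by nlinarith)
  rw [fPoly_diag] at h1 h2
  have hm : ((l : ℤ) ^ 2 - 1) ≡ -1 [ZMOD (l : ℤ) ^ 2] := by
    rw [Int.modEq_iff_dvd]
    exact ⟨-1, by ring⟩
  have e1 := hm.pow p
  have e2 := (hm.pow (p - 1)).pow 2
  rw [hodd.neg_one_pow] at e1
  rw [hev.neg_one_pow] at e2
  have e3 := ((e1.mul_left 4).mul_right ((q : ℤ) ^ p)).sub (e2.mul_left ((p : ℤ) ^ 2))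
  have h3 := (e3.symm.trans (Int.modEq_zero_iff_dvd.2 h2))
  have h3 := Int.modEq_zero_iff_dvd.1 h3
  have h4 : (l : ℤ) ^ 2 ∣ 2 * (p : ℤ) ^ 2 := by
    simp only [one_pow] at h1 h3
    obtain ⟨c, hc⟩ := h1
    obtain ⟨d, hd⟩ := h3
    exact ⟨-(c + d), by linear_combination -hc - hd⟩
  have h4 : l ^ 2 ∣ 2 * p ^ 2 := by exact_mod_cast h4
  have hlp : l = 2 ∨ l = p := by
    rcases (Nat.Prime.dvd_mul hl).1 ((dvd_pow_self l two_ne_zero).trans h4) with h | h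
    · exact Or.inl ((Nat.prime_dvd_prime_iff_eq hl Nat.prime_two).1 h)
    · exact Or.inr ((Nat.prime_dvd_prime_iff_eq hl hp).1 (hl.dvd_of_dvd_pow h))
  rcases hlp with rfl | rfl
  · have h5 : 2 ∣ p ^ 2 := by omega
    have h6 := (Nat.prime_dvd_prime_iff_eq Nat.prime_two hp).1 (Nat.prime_two.dvd_of_dvd_pow h5)
    omega
  · simp only [one_pow, mul_one] at h1
    have h5 : (l : ℤ) ∣ 4 * (q : ℤ) ^ l := by
      have h6 := (dvd_pow_self (l : ℤ) two_ne_zero).trans h1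
      exact (dvd_sub_left (dvd_pow_self (l : ℤ) two_ne_zero)).1 h6
    have h5 : l ∣ 4 * q ^ l := by exact_mod_cast h5
    rcases (Nat.Prime.dvd_mul hl).1 h5 with h | h
    · have := Nat.le_of_dvd (by norm_num) h
      omega
    · have := (Nat.prime_dvd_prime_iff_eq hl hq).1 (hl.dvd_of_dvd_pow h)
      omega
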